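/- If D_i = 0 for every i = 1, …, 21, then there exist scalars α_1, α_2, α_3, α_4 ∈ k such that Q = (α_1 z_1 + α_2 z_2 + α_3 z_3 + α_4 z_4)². -/

import Mathlib

noncomputable section

/-- The skew-commutation relation `z_j z_i = μ_{ij} z_i z_j` on the free algebra. -/
inductive SkewRel (k : Type*) [Field k] (μ : Fin 4 → Fin 4 → k) :
    FreeAlgebra k (Fin 4) → FreeAlgebra k (Fin 4) → Prop
  | rel (i j : Fin 4) :
      SkewRel k μ (FreeAlgebra.ι k j * FreeAlgebra.ι k i)
        (μ i j • (FreeAlgebra.ι k i * FreeAlgebra.ι k j))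

/-- The generators `z_1, …, z_4` of `S = k⟨z_1,…,z_4⟩/(z_j z_i - μ_{ij} z_i z_j)`. -/
def z (k : Type*) [Field k] (μ : Fin 4 → Fin 4 → k) (i : Fin 4) :
    RingQuot (SkewRel k μ) :=
  RingQuot.mkAlgHom k (SkewRel k μ) (FreeAlgebra.ι k i)

/-!
Put `c i j = 1 + μ i j` for `i < j`, symmetrically, and `c i i = 1`, and let `b` be the symmetric
matrix with the coefficients of `Q` on and above its diagonal. Then `Q = (∑ x i • z i) ^ 2` as soon
as `b i j = c i j * (x i * x j)` for all `i` and `j`, that is, as soon as the entrywise quotient of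
`b` by `c` is `x xᵀ`; the 21 `μ`-minors are, up to a factor `± 1`, `± 2` or `± 4`, the `2 × 2`
minors of that quotient with denominators cleared.

Any square roots `x i` of `b i i` satisfy `b i j = ± c i j * (x i * x j)`, and the signs have to be
made positive along the edges `b i j ≠ 0` of a graph. Take the right sign on as many edges as
possible. A wrong edge cannot join two components of the subgraph of right edges, since negating `x`
on one of them would correct it. Within a component its ends are joined by a path of right edges, of
length at most three because there are four vertices, and the minors say that a triangle or
four-cycle cannot have exactly one wrong edge.
-/

open Matrix SimpleGraph

section Minors

variable {n R : Type*} [CommRing R] {b c : Matrix n n R}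

/-- The entrywise quotient `b i j / c i j` has vanishing `2 × 2` minors, with denominators cleared
so that entries of `c` may vanish. These minors stand for the `μ`-minors of a quadratic form. -/
def QuotientMinorsVanish (b c : Matrix n n R) : Prop :=
  ∀ i i' j j', c i j' * c i' j * (b i j * b i' j') = c i j * c i' j' * (b i j' * b i' j)

theorem QuotientMinorsVanish.of_lt [LinearOrder n] (hb : b.IsSymm) (hc : c.IsSymm)
    (h : ∀ i i', i < i' → ∀ j j', j < j' → toLex (i, i') ≤ toLex (j, j') →
      c i j' * c i' j * (b i j * b i' j') = c i j * c i' j' * (b i j' * b i' j)) :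
    QuotientMinorsVanish b c := by
  have h_lt : ∀ i i', i < i' → ∀ j j', j < j' →
      c i j' * c i' j * (b i j * b i' j') = c i j * c i' j' * (b i j' * b i' j) := by
    intro i i' hi j j' hj
    rcases le_total (toLex (i, i')) (toLex (j, j')) with h_le | h_le
    · exact h i i' hi j j' hj h_le
    · have h_transpose := h j j' hj i i' hi h_le
      rw [hb.apply i j, hb.apply i j', hb.apply i' j, hb.apply i' j',
        hc.apply i j, hc.apply i j', hc.apply i' j, hc.apply i' j'] at h_transpose
      linear_combination h_transpose
  have h_row : ∀ i i', i < i' → ∀ j j',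
      c i j' * c i' j * (b i j * b i' j') = c i j * c i' j' * (b i j' * b i' j) := by
    intro i i' hi j j'
    rcases lt_trichotomy j j' with hj | rfl | hj
    · exact h_lt i i' hi j j' hj
    · rfl
    · exact (h_lt i i' hi j' j hj).symm
  intro i i' j j'
  rcases lt_trichotomy i i' with hi | rfl | hi
  · exact h_row i i' hi j j'
  · ring
  · linear_combination -h_row i' i hi j j'

variable [NoZeroDivisors R]

theorem QuotientMinorsVanish.eq_or_eq_neg (h : QuotientMinorsVanish b c) (hb : b.IsSymm)
    (hc : c.IsSymm) (hc_one : ∀ i, c i i = 1) {x : n → R} (hx : ∀ i, b i i = x i * x i) (i j : n) :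
    b i j = c i j * (x i * x j) ∨ b i j = -(c i j * (x i * x j)) := by
  have h_minor := h i j i j
  rw [hb.apply i j, hc.apply i j, hc_one, hc_one, hx, hx] at h_minor
  exact sq_eq_sq_iff_eq_or_eq_neg.1 (by linear_combination -h_minor)

theorem QuotientMinorsVanish.eq_of_three_steps (h : QuotientMinorsVanish b c) (hb : b.IsSymm)
    (hc : c.IsSymm) {x : n → R} {i k l j : n}
    (hik : b i k = c i k * (x i * x k)) (hkl : b k l = c k l * (x k * x l))
    (hlj : b l j = c l j * (x l * x j)) (hik_ne : b i k ≠ 0) (hkl_ne : b k l ≠ 0)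
    (hlj_ne : b l j ≠ 0) :
    b i j = c i j * (x i * x j) := by
  have hc_ik : c i k ≠ 0 := left_ne_zero_of_mul (hik ▸ hik_ne)
  have hc_lj : c l j ≠ 0 := left_ne_zero_of_mul (hlj ▸ hlj_ne)
  have h_minor := h i l k j
  rw [hb.apply k l, hc.apply k l] at h_minor
  refine mul_left_cancel₀ (mul_ne_zero (mul_ne_zero hc_ik hc_lj) hkl_ne) ?_
  linear_combination -h_minor + c i j * c k l * (b l j * hik + c i k * (x i * x k) * hlj)
    - c i k * c l j * c i j * (x i * x j) * hkl

end Minors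

section Factorization

variable {n R : Type*} [CommRing R] {b c : Matrix n n R} {H : SimpleGraph n} {x : n → R}

/-- A partial solution `x` of `b = c ⊙ vecMulVec x x`: the equation holds on the diagonal, where
`c` is meant to be `1`, and on the edges of `H`, which have to carry nonzero entries of `b`. -/
structure FactorsOn (b c : Matrix n n R) (H : SimpleGraph n) (x : n → R) : Prop where
  diag : ∀ i, b i i = x i * x i
  ne_zero : ∀ {i j}, H.Adj i j → b i j ≠ 0
  adj : ∀ {i j}, H.Adj i j → b i j = c i j * (x i * x j)

theorem FactorsOn.apply_self_ne_zero [NoZeroDivisors R] (hx : FactorsOn b c H x) {i j : n}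
    (hij : H.Adj i j) : b i i ≠ 0 := by
  have h_ne : c i j * (x i * x j) ≠ 0 := hx.adj hij ▸ hx.ne_zero hij
  have hx_i : x i ≠ 0 := left_ne_zero_of_mul (right_ne_zero_of_mul h_ne)
  exact hx.diag i ▸ mul_ne_zero hx_i hx_i

theorem FactorsOn.eq_of_walk_length_le_three [NoZeroDivisors R] (hx : FactorsOn b c H x)
    (hb : b.IsSymm) (hc : c.IsSymm) (hc_one : ∀ i, c i i = 1) (h : QuotientMinorsVanish b c)
    {i j : n} (p : H.Walk i j) (hp : p.length ≤ 3) : b i j = c i j * (x i * x j) := by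
  have h_diag : ∀ k, b k k = c k k * (x k * x k) := fun k ↦ by rw [hc_one, one_mul, hx.diag]
  match p with
  | .nil => exact h_diag i
  | .cons hij .nil => exact hx.adj hij
  | .cons hik (.cons hkj .nil) =>
    exact h.eq_of_three_steps hb hc (hx.adj hik) (h_diag _) (hx.adj hkj) (hx.ne_zero hik)
      (hx.apply_self_ne_zero hkj) (hx.ne_zero hkj)
  | .cons hik (.cons hkl (.cons hlj .nil)) =>
    exact h.eq_of_three_steps hb hc (hx.adj hik) (hx.adj hkl) (hx.adj hlj) (hx.ne_zero hik)
      (hx.ne_zero hkl) (hx.ne_zero hlj)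
  | .cons _ (.cons _ (.cons _ (.cons _ _))) =>
    simp only [Walk.length_cons] at hp
    omega

theorem FactorsOn.exists_sup_edge (hx : FactorsOn b c H x) (hb : b.IsSymm) (hc : c.IsSymm)
    {i j : n} (h_reach : ¬H.Reachable i j) (h_ne : b i j ≠ 0)
    (h_neg : b i j = -(c i j * (x i * x j))) : ∃ y, FactorsOn b c (H ⊔ edge i j) y := by
  classical
  let y : n → R := fun k ↦ if H.Reachable i k then -x k else x k
  have hy_ij : b i j = c i j * (y i * y j) := by simp [y, h_reach, h_neg]
  have h_adj : ∀ {k l}, (H ⊔ edge i j).Adj k l →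
      H.Adj k l ∨ (k = i ∧ l = j) ∨ (k = j ∧ l = i) := by
    intro k l hkl
    rw [sup_adj, edge_adj] at hkl
    tauto
  refine ⟨y, fun k ↦ ?_, fun {k l} hkl ↦ ?_, fun {k l} hkl ↦ ?_⟩
  · by_cases hk : H.Reachable i k <;> simp [y, hk, hx.diag]
  · rcases h_adj hkl with hkl | ⟨rfl, rfl⟩ | ⟨rfl, rfl⟩
    · exact hx.ne_zero hkl
    · exact h_ne
    · rwa [hb.apply]
  · rcases h_adj hkl with hkl | ⟨rfl, rfl⟩ | ⟨rfl, rfl⟩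
    · have h_iff : H.Reachable i k ↔ H.Reachable i l :=
        ⟨fun hk ↦ hk.trans hkl.reachable, fun hl ↦ hl.trans hkl.symm.reachable⟩
      by_cases hk : H.Reachable i k <;> simp [y, ← h_iff, hk, hx.adj hkl]
    · exact hy_ij
    · rw [hb.apply, hc.apply, mul_comm (y k), hy_ij]

theorem exists_eq_hadamard_vecMulVec [Fintype n] [NoZeroDivisors R] (hn : Fintype.card n ≤ 4)
    (hb : b.IsSymm) (hc : c.IsSymm) (hc_one : ∀ i, c i i = 1) (h : QuotientMinorsVanish b c)
    (h_sq : ∀ i, IsSquare (b i i)) : ∃ x : n → R, b = c ⊙ vecMulVec x x := by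
  choose r hr using h_sq
  have h_bot : FactorsOn b c ⊥ r := ⟨hr, fun h ↦ h.elim, fun h ↦ h.elim⟩
  obtain ⟨H, ⟨x, hx⟩, h_max⟩ :=
    (Set.toFinite {H : SimpleGraph n | ∃ x, FactorsOn b c H x}).exists_maximal ⟨⊥, r, h_bot⟩
  refine ⟨x, Matrix.ext fun i j ↦ ?_⟩
  rw [hadamard_apply, vecMulVec_apply]
  by_cases h_reach : H.Reachable i j
  · obtain ⟨p, hp⟩ := h_reach.exists_isPath
    exact hx.eq_of_walk_length_le_three hb hc hc_one h p (by have := hp.length_lt; omega)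
  rcases h.eq_or_eq_neg hb hc hc_one hx.diag i j with h_pos | h_neg
  · exact h_pos
  by_cases h_ne : b i j = 0
  · linear_combination 2 * h_ne - h_neg
  have h_le : H ⊔ edge i j ≤ H := h_max (hx.exists_sup_edge hb hc h_reach h_ne h_neg) le_sup_left
  rcases (edge_le_iff H).1 (le_sup_right.trans h_le) with rfl | hij
  · exact (h_reach .rfl).elim
  · exact (h_reach hij.reachable).elim

end Factorization

section AnticommCoeff

variable {ι R : Type*} [LinearOrder ι] [One R] [Add R]

/-- The symmetric matrix `c` for which generators with `w j * w i = μ i j • (w i * w j)` satisfy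
`w i * w j + w j * w i = c i j • (w i * w j)` whenever `i < j`. Its diagonal is set to `1`, so that
`c i j * (x i * x j)` is the coefficient of `w i * w j` in `(∑ i, x i • w i) ^ 2` for all
`i ≤ j`. -/
def anticommCoeff (μ : ι → ι → R) : Matrix ι ι R :=
  Matrix.of fun i j ↦ if i < j then 1 + μ i j else if j < i then 1 + μ j i else 1

theorem anticommCoeff_isSymm (μ : ι → ι → R) : (anticommCoeff μ).IsSymm := by
  ext i j
  rcases lt_trichotomy i j with hij | rfl | hij
  · simp [anticommCoeff, hij, hij.not_gt]
  · rfl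
  · simp [anticommCoeff, hij, hij.not_gt]

theorem anticommCoeff_self (μ : ι → ι → R) (i : ι) : anticommCoeff μ i i = 1 := by
  simp [anticommCoeff]

theorem anticommCoeff_of_lt (μ : ι → ι → R) {i j : ι} (hij : i < j) :
    anticommCoeff μ i j = 1 + μ i j := by
  simp [anticommCoeff, hij]

end AnticommCoeff

section SkewCommuting

variable {ι R A : Type*} [CommRing R] [Ring A] [Algebra R A] [Fintype ι] [LinearOrder ι]
  [LocallyFiniteOrderTop ι] [LocallyFiniteOrderBot ι]

theorem sum_smul_mul_eq_sq_sum_smul {b c : Matrix ι ι R} {x : ι → R} {w : ι → A}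
    (hb : b = c ⊙ vecMulVec x x) (hc_one : ∀ i, c i i = 1)
    (hw : ∀ i j, i < j → w i * w j + w j * w i = c i j • (w i * w j)) :
    ∑ i, b i i • (w i * w i) + ∑ i, ∑ j ∈ Finset.Ioi i, b i j • (w i * w j) =
      (∑ i, x i • w i) ^ 2 := by
  let f : ι → ι → A := fun i j ↦ (x j * x i) • (w j * w i)
  have h_entry : ∀ i j, b i j = c i j * (x i * x j) := congrFun₂ hb
  have h_diag : ∀ i, b i i • (w i * w i) = f i i := fun i ↦ by
    rw [h_entry, hc_one, one_mul]
  have h_pair : ∀ i, ∀ j ∈ Finset.Ioi i, b i j • (w i * w j) = f j i + f i j := fun i j hij ↦ by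
    rw [h_entry, mul_comm, mul_smul, ← hw i j (Finset.mem_Ioi.1 hij), smul_add]
    simp only [f, mul_comm (x j)]
  calc ∑ i, b i i • (w i * w i) + ∑ i, ∑ j ∈ Finset.Ioi i, b i j • (w i * w j)
    _ = ∑ i, f i i + ∑ i, ∑ j ∈ Finset.Ioi i, (f j i + f i j) := by
      rw [Finset.sum_congr rfl fun i _ ↦ h_diag i,
        Finset.sum_congr rfl fun i _ ↦ Finset.sum_congr rfl (h_pair i)]
    _ = ∑ i, ∑ j, f j i := by
      rw [Finset.sum_sum_Ioi_add_eq_sum_sum_off_diag, ← Finset.sum_add_distrib]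
      exact Finset.sum_congr rfl fun i _ ↦ (Fintype.sum_eq_add_sum_compl i fun j ↦ f j i).symm
    _ = (∑ i, x i • w i) ^ 2 := by
      simp only [f, sq, Finset.sum_mul_sum, smul_mul_smul_comm]

end SkewCommuting

theorem z_mul_z (k : Type*) [Field k] (μ : Fin 4 → Fin 4 → k) (i j : Fin 4) :
    z k μ j * z k μ i = μ i j • (z k μ i * z k μ j) := by
  simpa only [z, map_mul, map_smul] using RingQuot.mkAlgHom_rel k (SkewRel.rel (μ := μ) i j)

theorem z_mul_z_add_z_mul_z (k : Type*) [Field k] (μ : Fin 4 → Fin 4 → k) {i j : Fin 4}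
    (hij : i < j) :
    z k μ i * z k μ j + z k μ j * z k μ i = anticommCoeff μ i j • (z k μ i * z k μ j) := by
  rw [anticommCoeff_of_lt μ hij, add_smul, one_smul, z_mul_z k μ i j]

theorem stmt2_general (k : Type*) [Field k] (μ : Fin 4 → Fin 4 → k)
    (a11 a22 a33 a44 a12 a13 a14 a23 a24 a34 : k)
    (h11 : IsSquare a11) (h22 : IsSquare a22) (h33 : IsSquare a33) (h44 : IsSquare a44)
    (hD : 4 * a12 ^ 2 - (1 + μ 0 1) ^ 2 * a11 * a22 = 0 ∧
      4 * a13 ^ 2 - (1 + μ 0 2) ^ 2 * a11 * a33 = 0 ∧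
      4 * a14 ^ 2 - (1 + μ 0 3) ^ 2 * a11 * a44 = 0 ∧
      4 * a23 ^ 2 - (1 + μ 1 2) ^ 2 * a22 * a33 = 0 ∧
      4 * a24 ^ 2 - (1 + μ 1 3) ^ 2 * a22 * a44 = 0 ∧
      4 * a34 ^ 2 - (1 + μ 2 3) ^ 2 * a33 * a44 = 0 ∧
      2 * (1 + μ 1 2) * a12 * a13 - (1 + μ 0 1) * (1 + μ 0 2) * a11 * a23 = 0 ∧
      2 * (1 + μ 1 3) * a12 * a14 - (1 + μ 0 1) * (1 + μ 0 3) * a11 * a24 = 0 ∧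
      2 * (1 + μ 0 2) * a12 * a23 - (1 + μ 0 1) * (1 + μ 1 2) * a13 * a22 = 0 ∧
      2 * (1 + μ 0 3) * a12 * a24 - (1 + μ 0 1) * (1 + μ 1 3) * a14 * a22 = 0 ∧
      2 * (1 + μ 2 3) * a13 * a14 - (1 + μ 0 2) * (1 + μ 0 3) * a11 * a34 = 0 ∧
      2 * (1 + μ 0 1) * a13 * a23 - (1 + μ 0 2) * (1 + μ 1 2) * a33 * a12 = 0 ∧
      2 * (1 + μ 0 3) * a13 * a34 - (1 + μ 0 2) * (1 + μ 2 3) * a33 * a14 = 0 ∧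
      2 * (1 + μ 0 1) * a14 * a24 - (1 + μ 0 3) * (1 + μ 1 3) * a12 * a44 = 0 ∧
      2 * (1 + μ 0 2) * a14 * a34 - (1 + μ 0 3) * (1 + μ 2 3) * a13 * a44 = 0 ∧
      2 * (1 + μ 2 3) * a23 * a24 - (1 + μ 1 2) * (1 + μ 1 3) * a22 * a34 = 0 ∧
      2 * (1 + μ 1 3) * a23 * a34 - (1 + μ 1 2) * (1 + μ 2 3) * a33 * a24 = 0 ∧
      2 * (1 + μ 1 2) * a24 * a34 - (1 + μ 1 3) * (1 + μ 2 3) * a23 * a44 = 0 ∧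
      (1 + μ 0 2) * (1 + μ 1 3) * a12 * a34 - (1 + μ 0 1) * (1 + μ 2 3) * a13 * a24 = 0 ∧
      (1 + μ 0 3) * (1 + μ 1 2) * a13 * a24 - (1 + μ 0 2) * (1 + μ 1 3) * a14 * a23 = 0 ∧
      (1 + μ 0 1) * (1 + μ 2 3) * a14 * a23 - (1 + μ 0 3) * (1 + μ 1 2) * a12 * a34 = 0) :
    ∃ α1 α2 α3 α4 : k,
      (a11 • (z k μ 0 * z k μ 0) + a22 • (z k μ 1 * z k μ 1) +
      a33 • (z k μ 2 * z k μ 2) + a44 • (z k μ 3 * z k μ 3) +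
      (2 * a12) • (z k μ 0 * z k μ 1) + (2 * a13) • (z k μ 0 * z k μ 2) +
      (2 * a14) • (z k μ 0 * z k μ 3) + (2 * a23) • (z k μ 1 * z k μ 2) +
      (2 * a24) • (z k μ 1 * z k μ 3) + (2 * a34) • (z k μ 2 * z k μ 3)) =
        (α1 • z k μ 0 + α2 • z k μ 1 + α3 • z k μ 2 + α4 • z k μ 3) ^ 2 := by
  obtain ⟨d1, d2, d3, d4, d5, d6, d7, d8, d9, d10, d11, d12, d13, d14, d15, d16, d17, d18, d19,
    d20, d21⟩ := hD
  let b : Matrix (Fin 4) (Fin 4) k := !![a11, 2 * a12, 2 * a13, 2 * a14;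
    2 * a12, a22, 2 * a23, 2 * a24; 2 * a13, 2 * a23, a33, 2 * a34; 2 * a14, 2 * a24, 2 * a34, a44]
  have hb : b.IsSymm := by ext i j; fin_cases i <;> fin_cases j <;> rfl
  have h_sq : ∀ i, IsSquare (b i i) := by intro i; fin_cases i <;> assumption
  have h_minors : QuotientMinorsVanish b (anticommCoeff μ) := by
    refine .of_lt hb (anticommCoeff_isSymm μ) fun i i' hi j j' hj h_le ↦ ?_
    fin_cases i <;> fin_cases i' <;> first | exact absurd hi (by decide) | skip
    all_goals fin_cases j <;> fin_cases j' <;> first | exact absurd hj (by decide) | skip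
    all_goals first | exact absurd h_le (by decide) | skip
    all_goals simp only [b, anticommCoeff, of_apply, cons_val, Fin.reduceFinMk, Fin.zero_eta,
      Fin.mk_one, Fin.reduceLT, ↓reduceIte]
    -- One goal for each unordered pair of a row pair and a column pair, in lexicographic order.
    map_tacs [linear_combination -d1; linear_combination -2 * d7; linear_combination -2 * d8;
      linear_combination 2 * d9; linear_combination 2 * d10; linear_combination 4 * d20;
      linear_combination -d2; linear_combination -2 * d11; linear_combination -2 * d12;
      linear_combination -4 * d21; linear_combination 2 * d13; linear_combination -d3;
      linear_combination 4 * d19; linear_combination -2 * d14; linear_combination -2 * d15;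
      linear_combination -d4; linear_combination -2 * d16; linear_combination 2 * d17;
      linear_combination -d5; linear_combination -2 * d18; linear_combination -d6]
  obtain ⟨x, hx⟩ := exists_eq_hadamard_vecMulVec (by simp) hb (anticommCoeff_isSymm μ)
    (anticommCoeff_self μ) h_minors h_sq
  refine ⟨x 0, x 1, x 2, x 3, ?_⟩
  rw [← Fin.sum_univ_four fun i ↦ x i • z k μ i, ← sum_smul_mul_eq_sq_sum_smul hx
    (anticommCoeff_self μ) fun i j ↦ z_mul_z_add_z_mul_z k μ]
  simp only [← Finset.filter_lt_eq_Ioi, Finset.sum_filter, Fin.sum_univ_four, b, of_apply, cons_val,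
    Fin.reduceLT, ↓reduceIte]
  abel

theorem stmt2 (k : Type*) [Field k] [IsAlgClosed k] (h2 : (2 : k) ≠ 0)
    (μ : Fin 4 → Fin 4 → k) (hμdiag : ∀ i, μ i i = 1)
    (hμ : ∀ i j, μ i j * μ j i = 1)
    (a11 a22 a33 a44 a12 a13 a14 a23 a24 a34 : k)
    (hD : 4 * a12 ^ 2 - (1 + μ 0 1) ^ 2 * a11 * a22 = 0 ∧
      4 * a13 ^ 2 - (1 + μ 0 2) ^ 2 * a11 * a33 = 0 ∧
      4 * a14 ^ 2 - (1 + μ 0 3) ^ 2 * a11 * a44 = 0 ∧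
      4 * a23 ^ 2 - (1 + μ 1 2) ^ 2 * a22 * a33 = 0 ∧
      4 * a24 ^ 2 - (1 + μ 1 3) ^ 2 * a22 * a44 = 0 ∧
      4 * a34 ^ 2 - (1 + μ 2 3) ^ 2 * a33 * a44 = 0 ∧
      2 * (1 + μ 1 2) * a12 * a13 - (1 + μ 0 1) * (1 + μ 0 2) * a11 * a23 = 0 ∧
      2 * (1 + μ 1 3) * a12 * a14 - (1 + μ 0 1) * (1 + μ 0 3) * a11 * a24 = 0 ∧
      2 * (1 + μ 0 2) * a12 * a23 - (1 + μ 0 1) * (1 + μ 1 2) * a13 * a22 = 0 ∧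
      2 * (1 + μ 0 3) * a12 * a24 - (1 + μ 0 1) * (1 + μ 1 3) * a14 * a22 = 0 ∧
      2 * (1 + μ 2 3) * a13 * a14 - (1 + μ 0 2) * (1 + μ 0 3) * a11 * a34 = 0 ∧
      2 * (1 + μ 0 1) * a13 * a23 - (1 + μ 0 2) * (1 + μ 1 2) * a33 * a12 = 0 ∧
      2 * (1 + μ 0 3) * a13 * a34 - (1 + μ 0 2) * (1 + μ 2 3) * a33 * a14 = 0 ∧
      2 * (1 + μ 0 1) * a14 * a24 - (1 + μ 0 3) * (1 + μ 1 3) * a12 * a44 = 0 ∧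
      2 * (1 + μ 0 2) * a14 * a34 - (1 + μ 0 3) * (1 + μ 2 3) * a13 * a44 = 0 ∧
      2 * (1 + μ 2 3) * a23 * a24 - (1 + μ 1 2) * (1 + μ 1 3) * a22 * a34 = 0 ∧
      2 * (1 + μ 1 3) * a23 * a34 - (1 + μ 1 2) * (1 + μ 2 3) * a33 * a24 = 0 ∧
      2 * (1 + μ 1 2) * a24 * a34 - (1 + μ 1 3) * (1 + μ 2 3) * a23 * a44 = 0 ∧
      (1 + μ 0 2) * (1 + μ 1 3) * a12 * a34 - (1 + μ 0 1) * (1 + μ 2 3) * a13 * a24 = 0 ∧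
      (1 + μ 0 3) * (1 + μ 1 2) * a13 * a24 - (1 + μ 0 2) * (1 + μ 1 3) * a14 * a23 = 0 ∧
      (1 + μ 0 1) * (1 + μ 2 3) * a14 * a23 - (1 + μ 0 3) * (1 + μ 1 2) * a12 * a34 = 0) :
    ∃ α1 α2 α3 α4 : k,
      (a11 • (z k μ 0 * z k μ 0) + a22 • (z k μ 1 * z k μ 1) +
      a33 • (z k μ 2 * z k μ 2) + a44 • (z k μ 3 * z k μ 3) +
      (2 * a12) • (z k μ 0 * z k μ 1) + (2 * a13) • (z k μ 0 * z k μ 2) +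
      (2 * a14) • (z k μ 0 * z k μ 3) + (2 * a23) • (z k μ 1 * z k μ 2) +
      (2 * a24) • (z k μ 1 * z k μ 3) + (2 * a34) • (z k μ 2 * z k μ 3)) =
        (α1 • z k μ 0 + α2 • z k μ 1 + α3 • z k μ 2 + α4 • z k μ 3) ^ 2 :=
  have h_sq := IsAlgClosed.exists_eq_mul_self (k := k)
  stmt2_general k μ _ _ _ _ _ _ _ _ _ _ (h_sq _) (h_sq _) (h_sq _) (h_sq _) hD
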